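/- arXiv:1704.04191 — 2 statements merged into one kernel-verified Lean document; each statement's English description precedes it below -/
import Mathlib

section
/- Let f : ℝⁿ → ℝᵐ be strictly differentiable at x̄, let F : ℝⁿ ⇉ ℝᵐ be a set-valued map whose graph is locally closed at (x̄, ȳ), and let ȳ ∈ F(x̄). Then for every u ∈ ℝᵐ, D*(f + F)(x̄ | f(x̄) + ȳ)(u) = ∇f(x̄)ᵀ u + D*F(x̄ | ȳ)(u), where f + F denotes the set-valued map z ↦ { f(z) + w : w ∈ F(z) }. -/
open Filter Topology Set Metric RealInnerProductSpace
open scoped ENNReal NNReal Pointwise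

noncomputable section

/-- Graph of a set-valued map. -/
def svGraph {α β : Type*} (F : α → Set β) : Set (α × β) := {p | p.2 ∈ F p.1}

/-- Inverse of a set-valued map. -/
def svInv {α β : Type*} (F : α → Set β) : β → Set α := fun y => {x | y ∈ F x}

/-- Local closedness of a set at a point of a metric space. -/
def LocClosedAt {α : Type*} [PseudoMetricSpace α] (s : Set α) (p : α) : Prop :=
  ∃ r : ℝ, 0 < r ∧ IsClosed (s ∩ Metric.closedBall p r)

section Cones

variable {X : Type*} [NormedAddCommGroup X] [NormedSpace ℝ X]

/-- Bouligand-Severi contingent cone. -/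
def contingentCone (Ω : Set X) (x : X) : Set X :=
  { u | ∃ (t : ℕ → ℝ) (uk : ℕ → X), (∀ k, 0 < t k) ∧
      Tendsto t atTop (𝓝 0) ∧ Tendsto uk atTop (𝓝 u) ∧ ∀ k, x + t k • uk k ∈ Ω }

/-- Bouligand paratingent cone. -/
def paratingentCone (Ω : Set X) (x : X) : Set X :=
  { u | ∃ (t : ℕ → ℝ) (uk : ℕ → X) (xk : ℕ → X), (∀ k, 0 < t k) ∧
      Tendsto t atTop (𝓝 0) ∧ Tendsto uk atTop (𝓝 u) ∧
      (∀ k, xk k ∈ Ω) ∧ Tendsto xk atTop (𝓝 x) ∧ ∀ k, xk k + t k • uk k ∈ Ω }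

end Cones

section NormalCones

variable {X : Type*} [NormedAddCommGroup X] [InnerProductSpace ℝ X]

/-- Fréchet (regular) normal cone. -/
def frechetNormalCone (Ω : Set X) (x : X) : Set X :=
  { v | ∀ ε : ℝ, 0 < ε → ∃ δ : ℝ, 0 < δ ∧ ∀ y ∈ Ω, ‖y - x‖ < δ →
      ⟪v, y - x⟫ ≤ ε * ‖y - x‖ }

/-- Limiting (Mordukhovich) normal cone. -/
def limitingNormalCone (Ω : Set X) (x : X) : Set X :=
  { v | ∃ (xk : ℕ → X) (vk : ℕ → X), (∀ k, xk k ∈ Ω) ∧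
      Tendsto xk atTop (𝓝 x) ∧ Tendsto vk atTop (𝓝 v) ∧
      ∀ k, vk k ∈ frechetNormalCone Ω (xk k) }

end NormalCones

section Derivatives

variable {E F : Type*} [NormedAddCommGroup E] [NormedSpace ℝ E]
  [NormedAddCommGroup F] [NormedSpace ℝ F]

/-- Graphical derivative. -/
def gDeriv (Fm : E → Set F) (x : E) (y : F) : E → Set F := fun u =>
  {v | (u, v) ∈ contingentCone (svGraph Fm) (x, y)}

/-- Strict graphical derivative. -/
def sgDeriv (Fm : E → Set F) (x : E) (y : F) : E → Set F := fun u =>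
  {v | (u, v) ∈ paratingentCone (svGraph Fm) (x, y)}

end Derivatives

section Coderivative

variable {E F : Type*} [NormedAddCommGroup E] [InnerProductSpace ℝ E]
  [NormedAddCommGroup F] [InnerProductSpace ℝ F]

/-- Coderivative: `w ∈ D*F(x|y)(z)` iff `(w, -z)` is in the limiting normal cone
to the graph of `F` (viewed inside the `ℓ²` product) at `(x, y)`. -/
def coDeriv (Fm : E → Set F) (x : E) (y : F) : F → Set E := fun z =>
  { w | (WithLp.equiv 2 (E × F)).symm (w, -z) ∈
      limitingNormalCone ((WithLp.equiv 2 (E × F)).symm '' svGraph Fm)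
        ((WithLp.equiv 2 (E × F)).symm (x, y)) }

end Coderivative

section Norms

variable {E F : Type*} [NormedAddCommGroup E] [NormedAddCommGroup F]

/-- Outer norm of a (positively homogeneous) set-valued map. -/
def outerNormSV (H : E → Set F) : ℝ≥0∞ :=
  ⨆ (x : E) (_ : ‖x‖ ≤ 1) (y : F) (_ : y ∈ H x), (‖y‖₊ : ℝ≥0∞)

/-- Inner norm of a (positively homogeneous) set-valued map. -/
def innerNormSV (H : E → Set F) : ℝ≥0∞ :=
  ⨆ (x : E) (_ : ‖x‖ ≤ 1), ⨅ (y : F) (_ : y ∈ H x), (‖y‖₊ : ℝ≥0∞)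

/-- Positive homogeneity of a set-valued map. -/
def PosHomogeneous {E F : Type*} [NormedAddCommGroup E] [NormedSpace ℝ E]
    [NormedAddCommGroup F] [NormedSpace ℝ F] (H : E → Set F) : Prop :=
  (0 : F) ∈ H 0 ∧ ∀ (c : ℝ), 0 < c → ∀ x, H (c • x) = c • (H x)

end Norms

section Stability

variable {E F : Type*} [NormedAddCommGroup E] [NormedAddCommGroup F]

/-- Metric regularity with constant `κ`. -/
def MetrRegWith (κ : ℝ≥0) (Fm : E → Set F) (xbar : E) (ybar : F) : Prop :=
  ∃ U ∈ 𝓝 xbar, ∃ V ∈ 𝓝 ybar, ∀ x ∈ U, ∀ y ∈ V,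
    EMetric.infEdist x (svInv Fm y) ≤ (κ : ℝ≥0∞) * EMetric.infEdist y (Fm x)

/-- The regularity modulus `reg (F; xbar|ybar)`. -/
def regMod (Fm : E → Set F) (xbar : E) (ybar : F) : ℝ≥0∞ :=
  ⨅ (κ : ℝ≥0) (_ : MetrRegWith κ Fm xbar ybar), (κ : ℝ≥0∞)

/-- Aubin property with constant `κ`. -/
def AubinWith (κ : ℝ≥0) (S : F → Set E) (ybar : F) (xbar : E) : Prop :=
  ∃ V ∈ 𝓝 ybar, ∃ U ∈ 𝓝 xbar, ∀ y ∈ V, ∀ y' ∈ V, ∀ x ∈ S y' ∩ U,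
    ∃ x' ∈ S y, ‖x - x'‖ ≤ (κ : ℝ) * ‖y - y'‖

/-- The Lipschitz modulus `lip (S; ybar|xbar)`. -/
def lipMod (S : F → Set E) (ybar : F) (xbar : E) : ℝ≥0∞ :=
  ⨅ (κ : ℝ≥0) (_ : AubinWith κ S ybar xbar), (κ : ℝ≥0∞)

/-- Strong metric subregularity with constant `κ`. -/
def SubregWith (κ : ℝ≥0) (Fm : E → Set F) (xbar : E) (ybar : F) : Prop :=
  ∃ U ∈ 𝓝 xbar, ∀ x ∈ U, (‖x - xbar‖₊ : ℝ≥0∞) ≤ (κ : ℝ≥0∞) * EMetric.infEdist ybar (Fm x)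

/-- The subregularity modulus `subreg (F; xbar|ybar)`. -/
def subregMod (Fm : E → Set F) (xbar : E) (ybar : F) : ℝ≥0∞ :=
  ⨅ (κ : ℝ≥0) (_ : SubregWith κ Fm xbar ybar), (κ : ℝ≥0∞)

/-- Isolated calmness with constant `κ`. -/
def CalmWith (κ : ℝ≥0) (S : F → Set E) (ybar : F) (xbar : E) : Prop :=
  ∃ V ∈ 𝓝 ybar, ∃ U ∈ 𝓝 xbar, ∀ y ∈ V, ∀ x ∈ S y ∩ U, ‖x - xbar‖ ≤ (κ : ℝ) * ‖y - ybar‖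

/-- The calmness modulus `clm (S; ybar|xbar)`. -/
def clmMod (S : F → Set E) (ybar : F) (xbar : E) : ℝ≥0∞ :=
  ⨅ (κ : ℝ≥0) (_ : CalmWith κ S ybar xbar), (κ : ℝ≥0∞)

/-- Strong metric regularity: metric regularity plus a single-valued localization
of the inverse. -/
def StrongMetrReg (Fm : E → Set F) (xbar : E) (ybar : F) : Prop :=
  (∃ κ : ℝ≥0, MetrRegWith κ Fm xbar ybar) ∧
  ∃ U ∈ 𝓝 xbar, ∃ V ∈ 𝓝 ybar, ∀ y ∈ V, (svInv Fm y ∩ U).Subsingleton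

end Stability

/- The shear `(x, y) ↦ (x, y - f x)` carries the graph of `f + F` onto the graph of `F`, and under a
change of variables that is strictly differentiable with invertible derivative, limiting normal
cones are transformed by the adjoint of the derivative. Since `f` need not be differentiable off
`xbar`, a Fréchet normal at a nearby point only goes over to a Fréchet `ε`-normal, where `ε → 0` by
strict differentiability. In finite dimensions this is enough: by projecting onto the locally
closed set, Fréchet `ε`-normals are approximated by Fréchet normals at nearby points. -/

namespace LocClosedAt

theorem preimage {α β : Type*} [PseudoMetricSpace α] [PseudoMetricSpace β] {g : α → β} {t : Set β}
    {p : α} (ht : LocClosedAt t (g p)) (hg : ∀ᶠ x in 𝓝 p, ContinuousAt g x) :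
    LocClosedAt (g ⁻¹' t) p := by
  obtain ⟨r, hr, hclosed⟩ := ht
  have hball : ∀ᶠ x in 𝓝 p, g x ∈ closedBall (g p) r :=
    hg.self_of_nhds (closedBall_mem_nhds _ hr)
  obtain ⟨s, hs, hsub⟩ := nhds_basis_closedBall.eventually_iff.1 (hg.and hball)
  have hcont : ContinuousOn g (closedBall p s) := fun x hx => (hsub hx).1.continuousWithinAt
  refine ⟨s, hs, ?_⟩
  convert hcont.preimage_isClosed_of_isClosed isClosed_closedBall hclosed using 1
  ext x
  exact ⟨fun h => ⟨h.2, h.1, (hsub h.2).2⟩, fun h => ⟨h.2.1, h.1⟩⟩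

theorem eventually {α : Type*} [PseudoMetricSpace α] {s : Set α} {p : α} (hs : LocClosedAt s p) :
    ∀ᶠ x in 𝓝 p, LocClosedAt s x := by
  obtain ⟨r, hr, hclosed⟩ := hs
  filter_upwards [ball_mem_nhds p (half_pos hr)] with x hx
  have hsub : closedBall x (r / 2) ⊆ closedBall p r :=
    closedBall_subset_closedBall' (by linarith [mem_ball.1 hx])
  refine ⟨r / 2, half_pos hr, ?_⟩
  rw [← inter_eq_self_of_subset_right hsub, ← inter_assoc]
  exact hclosed.inter isClosed_closedBall

theorem eventually_exists_isLocalMinOn_norm_sub {X : Type*} [NormedAddCommGroup X] [ProperSpace X]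
    {Ω V : Set X} {x : X} (hΩ : LocClosedAt Ω x) (hx : x ∈ Ω) (hV : V ∈ 𝓝 x) :
    ∀ᶠ p in 𝓝 x, ∃ w ∈ Ω ∩ V, ‖p - w‖ ≤ ‖p - x‖ ∧ IsLocalMinOn (fun y => ‖p - y‖) Ω w := by
  obtain ⟨r, hr, hclosed⟩ := hΩ
  obtain ⟨s, hs, hsV⟩ := Metric.mem_nhds_iff.1 (inter_mem hV (ball_mem_nhds x hr))
  have hcompact : IsCompact (Ω ∩ closedBall x r) :=
    (isCompact_closedBall x r).of_isClosed_subset hclosed inter_subset_right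
  filter_upwards [ball_mem_nhds x (half_pos hs)] with p hp
  rw [mem_ball, dist_eq_norm] at hp
  obtain ⟨w, ⟨hwΩ, -⟩, hmin⟩ := hcompact.exists_isMinOn (f := fun y => ‖p - y‖)
    ⟨x, hx, mem_closedBall_self hr.le⟩ (by fun_prop)
  have hpw : ‖p - w‖ ≤ ‖p - x‖ := hmin ⟨hx, mem_closedBall_self hr.le⟩
  have hwx : w ∈ ball x s := by
    rw [mem_ball, dist_eq_norm]
    linarith [norm_sub_le_norm_sub_add_norm_sub w p x, norm_sub_rev w p]
  obtain ⟨hwV, hwr⟩ := hsV hwx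
  refine ⟨w, ⟨hwΩ, hwV⟩, hpw, ?_⟩
  rw [IsLocalMinOn, ← nhdsWithin_inter_of_mem'
    (mem_nhdsWithin_of_mem_nhds (closedBall_mem_nhds_of_mem hwr))]
  exact hmin.localize

end LocClosedAt

section NormalCones

variable {X : Type*} [NormedAddCommGroup X] [InnerProductSpace ℝ X] {Ω Ω' : Set X} {x v : X}

/-- The set `N̂_ε(x; Ω)` of Fréchet `ε`-normals: the vectors `v` with
`limsup ⟪v, y - x⟫ / ‖y - x‖ ≤ ε` as `y → x` in `Ω`. The upper limit is written with every
`ε' > ε`, and without division, so that `y = x` need not be excluded. -/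
def epsNormalSet (ε : ℝ) (Ω : Set X) (x : X) : Set X :=
  {v | ∀ ε' > ε, ∀ᶠ y in 𝓝[Ω] x, ⟪v, y - x⟫ ≤ ε' * ‖y - x‖}

theorem epsNormalSet_zero : epsNormalSet 0 Ω x = frechetNormalCone Ω x := by
  ext v
  refine forall₂_congr fun ε _ => ?_
  simp only [eventually_nhdsWithin_iff, Metric.eventually_nhds_iff, dist_eq_norm]
  exact exists_congr fun δ => and_congr_right fun _ =>
    forall_congr' fun y => ⟨fun h hy hlt => h hlt hy, fun h hlt hy => h hy hlt⟩

theorem epsNormalSet_mono {ε₁ ε₂ : ℝ} (h : ε₁ ≤ ε₂) : epsNormalSet ε₁ Ω x ⊆ epsNormalSet ε₂ Ω x :=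
  fun _ hv ε' hε' => hv ε' (h.trans_lt hε')

theorem frechetNormalCone_congr (h : Ω =ᶠ[𝓝 x] Ω') :
    frechetNormalCone Ω x = frechetNormalCone Ω' x := by
  simp only [← epsNormalSet_zero, epsNormalSet, nhdsWithin_eq_iff_eventuallyEq.2 h]

theorem smul_mem_frechetNormalCone {t : ℝ} (ht : 0 < t) (hv : v ∈ frechetNormalCone Ω x) :
    t • v ∈ frechetNormalCone Ω x := by
  rw [← epsNormalSet_zero] at hv ⊢
  intro ε hε
  filter_upwards [hv (t⁻¹ * ε) (by positivity)] with y hy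
  rw [real_inner_smul_left]
  calc t * ⟪v, y - x⟫ ≤ t * (t⁻¹ * ε * ‖y - x‖) := by gcongr
    _ = ε * ‖y - x‖ := by field_simp

theorem sub_mem_frechetNormalCone_of_isLocalMinOn {p w : X}
    (h : IsLocalMinOn (fun y => ‖p - y‖) Ω w) : p - w ∈ frechetNormalCone Ω w := by
  rw [← epsNormalSet_zero]
  intro ε hε
  have hnear : ∀ᶠ y in 𝓝[Ω] w, y ∈ ball w (2 * ε) :=
    mem_nhdsWithin_of_mem_nhds (ball_mem_nhds w (by positivity))
  filter_upwards [h, hnear] with y hmin hy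
  rw [mem_ball, dist_eq_norm] at hy
  have hsq : ‖p - w‖ ^ 2 ≤ ‖(p - w) - (y - w)‖ ^ 2 := by
    rw [sub_sub_sub_cancel_right]
    gcongr
  rw [norm_sub_sq_real (p - w)] at hsq
  nlinarith [norm_nonneg (y - w)]

theorem mem_limitingNormalCone_iff_frequently :
    v ∈ limitingNormalCone Ω x ↔
      ∃ᶠ p in 𝓝 (x, v), p.1 ∈ Ω ∧ p.2 ∈ frechetNormalCone Ω p.1 := by
  refine Iff.trans ?_ (mem_closure_iff_seq_limit.symm.trans mem_closure_iff_frequently)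
  constructor
  · rintro ⟨xk, vk, hxΩ, hx, hv, hvN⟩
    exact ⟨fun k => (xk k, vk k), fun k => ⟨hxΩ k, hvN k⟩, hx.prodMk_nhds hv⟩
  · rintro ⟨pk, hpk, hp⟩
    exact ⟨fun k => (pk k).1, fun k => (pk k).2, fun k => (hpk k).1,
      (continuous_fst.tendsto _).comp hp, (continuous_snd.tendsto _).comp hp, fun k => (hpk k).2⟩

theorem limitingNormalCone_congr (h : Ω =ᶠ[𝓝 x] Ω') :
    limitingNormalCone Ω x = limitingNormalCone Ω' x := by
  ext v
  simp only [mem_limitingNormalCone_iff_frequently]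
  have hfst : Tendsto Prod.fst (𝓝 (x, v)) (𝓝 x) := continuous_fst.tendsto _
  refine frequently_congr ?_
  filter_upwards [hfst.eventually h.eventuallyEq_nhds] with p hp
  rw [frechetNormalCone_congr hp, hp.mem_iff.self_of_nhds]

variable [ProperSpace X]

-- `w` is a point of `Ω` nearest to `x + t • v` for a small `t > 0`, and
-- `n = t⁻¹ • (x + t • v - w) = v - t⁻¹ • (w - x)` is the resulting proximal normal.
theorem exists_mem_frechetNormalCone_norm_sub_le {V : Set X} {ε ε' : ℝ} (hΩ : LocClosedAt Ω x)
    (hx : x ∈ Ω) (hv : v ∈ epsNormalSet ε Ω x) (hε : ε < ε') (hε' : 0 ≤ ε') (hV : V ∈ 𝓝 x) :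
    ∃ w ∈ Ω ∩ V, ∃ n ∈ frechetNormalCone Ω w, ‖n - v‖ ≤ 2 * ε' := by
  have hv' := eventually_nhdsWithin_iff.1 (hv ε' hε)
  have htend : Tendsto (fun t : ℝ => x + t • v) (𝓝[>] 0) (𝓝 x) := by
    refine tendsto_nhdsWithin_of_tendsto_nhds ?_
    exact Continuous.tendsto' (by fun_prop) _ _ (by simp)
  obtain ⟨t, ⟨w, ⟨hwΩ, hwV, hwv⟩, hle, hmin⟩, ht⟩ :=
    ((htend.eventually (hΩ.eventually_exists_isLocalMinOn_norm_sub hx (inter_mem hV hv'))).and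
      self_mem_nhdsWithin).exists
  replace ht : 0 < t := ht
  have hwx : ‖w - x‖ ≤ t * (2 * ε') := by
    have hsq : ‖t • v - (w - x)‖ ^ 2 ≤ ‖t • v‖ ^ 2 := by
      rw [show t • v - (w - x) = x + t • v - w by abel]
      gcongr
      simpa using hle
    rw [norm_sub_sq_real, real_inner_smul_left] at hsq
    have hinner : t * ⟪v, w - x⟫ ≤ t * (ε' * ‖w - x‖) := by
      gcongr
      exact hwv hwΩ
    have hquad : ‖w - x‖ * ‖w - x‖ ≤ t * (2 * ε') * ‖w - x‖ := by linarith
    by_contra! hlt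
    exact hquad.not_gt (mul_lt_mul_of_pos_right hlt (lt_of_le_of_lt (by positivity) hlt))
  refine ⟨w, ⟨hwΩ, hwV⟩, t⁻¹ • (x + t • v - w), smul_mem_frechetNormalCone (inv_pos.2 ht)
    (sub_mem_frechetNormalCone_of_isLocalMinOn hmin), ?_⟩
  have hn : t⁻¹ • (x + t • v - w) - v = t⁻¹ • (x - w) := by
    rw [add_sub_right_comm, smul_add, inv_smul_smul₀ ht.ne', add_sub_cancel_right]
  rwa [hn, norm_smul, norm_inv, Real.norm_of_nonneg ht.le, norm_sub_rev, inv_mul_le_iff₀ ht]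

theorem mem_limitingNormalCone_of_frequently_epsNormalSet (hΩ : LocClosedAt Ω x)
    (h : ∀ ε > 0, ∃ᶠ p in 𝓝 (x, v), p.1 ∈ Ω ∧ p.2 ∈ epsNormalSet ε Ω p.1) :
    v ∈ limitingNormalCone Ω x := by
  rw [mem_limitingNormalCone_iff_frequently, (nhds_basis_ball (x := (x, v))).frequently_iff]
  intro η hη
  have hfst : Tendsto Prod.fst (𝓝 (x, v)) (𝓝 x) := continuous_fst.tendsto _
  obtain ⟨⟨y, v'⟩, ⟨hyΩ, hv'⟩, hcl, hball⟩ := ((h (η / 8) (by positivity)).and_eventually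
    ((hfst.eventually hΩ.eventually).and (ball_mem_nhds _ (half_pos hη)))).exists
  replace hball := max_lt_iff.1 hball
  obtain ⟨w, ⟨hwΩ, hwη⟩, n, hn, hnv⟩ := exists_mem_frechetNormalCone_norm_sub_le hcl hyΩ hv'
    (show η / 8 < η / 4 by linarith) (by positivity) (isOpen_ball.mem_nhds (mem_ball.2 hball.1))
  refine ⟨(w, n), ?_, hwΩ, hn⟩
  rw [← ball_prod_same]
  refine ⟨ball_subset_ball (by linarith) hwη, ?_⟩
  calc dist n v ≤ dist n v' + dist v' v := dist_triangle n v' v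
    _ < 2 * (η / 4) + η / 2 := add_lt_add_of_le_of_lt (dist_eq_norm n v' ▸ hnv) hball.2
    _ = η := by ring

end NormalCones

section StrictDifferentiability

theorem continuousAt_of_eventually_norm_sub_le {X Y : Type*} [SeminormedAddCommGroup X]
    [SeminormedAddCommGroup Y] {Φ : X → Y} {x : X} {c : ℝ}
    (h : ∀ᶠ z in 𝓝 x, ‖Φ z - Φ x‖ ≤ c * ‖z - x‖) : ContinuousAt Φ x := by
  obtain ⟨r, hr, hlip⟩ := Metric.eventually_nhds_iff.1 h
  exact continuousAt_of_locally_lipschitz hr c fun z hz => by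
    simpa only [dist_eq_norm] using hlip hz

variable {X Y : Type*} [NormedAddCommGroup X] [NormedSpace ℝ X] [NormedAddCommGroup Y]
  [NormedSpace ℝ Y] {Φ : X → Y} {A : X →L[ℝ] Y} {x : X} {c : ℝ}

theorem eventually_eventually_norm_sub_sub_le_of_hasStrictFDerivAt
    (hΦ : HasStrictFDerivAt Φ A x) (hc : 0 < c) :
    ∀ᶠ y in 𝓝 x, ∀ᶠ z in 𝓝 y, ‖Φ z - Φ y - A (z - y)‖ ≤ c * ‖z - y‖ := by
  have hdiag : Tendsto (fun y => (y, y)) (𝓝 x) (𝓝 (x, x)) := tendsto_id.prodMk_nhds tendsto_id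
  filter_upwards [hdiag.eventually (hΦ.isLittleO.def hc).eventually_nhds] with y hy
  exact (tendsto_id.prodMk_nhds tendsto_const_nhds).eventually hy

theorem eventually_norm_sub_le_of_norm_sub_sub_le
    (h : ∀ᶠ z in 𝓝 x, ‖Φ z - Φ x - A (z - x)‖ ≤ c * ‖z - x‖) :
    ∀ᶠ z in 𝓝 x, ‖Φ z - Φ x‖ ≤ (‖A‖ + c) * ‖z - x‖ := by
  filter_upwards [h] with z hz
  calc ‖Φ z - Φ x‖ ≤ ‖A (z - x)‖ + ‖Φ z - Φ x - A (z - x)‖ := norm_le_norm_add_norm_sub' _ _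
    _ ≤ (‖A‖ + c) * ‖z - x‖ := by linarith [A.le_opNorm (z - x)]

theorem eventually_continuousAt_of_hasStrictFDerivAt (hΦ : HasStrictFDerivAt Φ A x) :
    ∀ᶠ y in 𝓝 x, ContinuousAt Φ y :=
  (eventually_eventually_norm_sub_sub_le_of_hasStrictFDerivAt hΦ one_pos).mono fun _ h =>
    continuousAt_of_eventually_norm_sub_le (eventually_norm_sub_le_of_norm_sub_sub_le h)

end StrictDifferentiability

section ChangeOfVariables

open ContinuousLinearMap (adjoint)

variable {X Y : Type*} [NormedAddCommGroup X] [InnerProductSpace ℝ X] [NormedAddCommGroup Y]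
  [InnerProductSpace ℝ Y] {Φ : X → Y} {Θ : Set Y} {x : X}

theorem adjoint_mem_epsNormalSet_preimage [CompleteSpace X] [CompleteSpace Y] {A : X →L[ℝ] Y}
    {v : Y} {c : ℝ} (hΦ : ∀ᶠ z in 𝓝 x, ‖Φ z - Φ x - A (z - x)‖ ≤ c * ‖z - x‖)
    (hv : v ∈ frechetNormalCone Θ (Φ x)) :
    adjoint A v ∈ epsNormalSet (c * ‖v‖) (Φ ⁻¹' Θ) x := by
  intro ε hε
  have hlip := eventually_norm_sub_le_of_norm_sub_sub_le hΦ
  have htend : Tendsto Φ (𝓝[Φ ⁻¹' Θ] x) (𝓝[Θ] (Φ x)) :=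
    (continuousAt_of_eventually_norm_sub_le hlip).continuousWithinAt.tendsto_nhdsWithin
      (mapsTo_preimage Φ Θ)
  obtain ⟨η, hη, hηε⟩ : ∃ η > 0, η * (‖A‖ + c) < ε - c * ‖v‖ :=
    exists_pos_mul_lt (sub_pos.2 hε) _ |>.imp fun η h => ⟨h.1, by simpa [mul_comm] using h.2⟩
  rw [← epsNormalSet_zero] at hv
  filter_upwards [htend.eventually (hv η hη), nhdsWithin_le_nhds hΦ, nhdsWithin_le_nhds hlip]
    with z hinner herr hz
  have hsplit : A (z - x) = (Φ z - Φ x) - (Φ z - Φ x - A (z - x)) := by abel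
  calc ⟪adjoint A v, z - x⟫ = ⟪v, Φ z - Φ x⟫ - ⟪v, Φ z - Φ x - A (z - x)⟫ := by
        rw [ContinuousLinearMap.adjoint_inner_left, ← inner_sub_right, ← hsplit]
    _ ≤ η * ‖Φ z - Φ x‖ + ‖v‖ * ‖Φ z - Φ x - A (z - x)‖ := by
        linarith [(abs_le.1 (abs_real_inner_le_norm v (Φ z - Φ x - A (z - x)))).1]
    _ ≤ η * ((‖A‖ + c) * ‖z - x‖) + ‖v‖ * (c * ‖z - x‖) := by gcongr
    _ = (η * (‖A‖ + c) + c * ‖v‖) * ‖z - x‖ := by ring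
    _ ≤ ε * ‖z - x‖ := by gcongr; linarith

variable [ProperSpace X]

theorem adjoint_mem_limitingNormalCone_preimage [CompleteSpace Y] {A : X →L[ℝ] Y}
    (hΦ : HasStrictFDerivAt Φ A x) (hA : A.range = ⊤) (hΘ : LocClosedAt Θ (Φ x)) {v : Y}
    (hv : v ∈ limitingNormalCone Θ (Φ x)) :
    adjoint A v ∈ limitingNormalCone (Φ ⁻¹' Θ) x := by
  refine mem_limitingNormalCone_of_frequently_epsNormalSet
    (hΘ.preimage (eventually_continuousAt_of_hasStrictFDerivAt hΦ)) fun ε hε => ?_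
  have hfreq : ∃ᶠ q in 𝓝 x ×ˢ 𝓝 v, Φ q.1 ∈ Θ ∧ q.2 ∈ frechetNormalCone Θ (Φ q.1) := by
    rw [mem_limitingNormalCone_iff_frequently, nhds_prod_eq, ← hΦ.map_nhds_eq_of_surj hA,
      ← map_id (f := 𝓝 v), prod_map_map_eq, frequently_map] at hv
    exact hv
  obtain ⟨c, hc, hcε⟩ : ∃ c > 0, (‖v‖ + 1) * c < ε := exists_pos_mul_lt hε _
  have hest : ∀ᶠ q in 𝓝 x ×ˢ 𝓝 v,
      ∀ᶠ z in 𝓝 q.1, ‖Φ z - Φ q.1 - A (z - q.1)‖ ≤ c * ‖z - q.1‖ :=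
    tendsto_fst.eventually
      (eventually_eventually_norm_sub_sub_le_of_hasStrictFDerivAt hΦ hc)
  have hnorm : ∀ᶠ q in 𝓝 x ×ˢ 𝓝 v, ‖q.2‖ < ‖v‖ + 1 :=
    tendsto_snd.norm.eventually_lt_const (lt_add_one _)
  have htend : Tendsto (fun q : X × Y => (q.1, adjoint A q.2)) (𝓝 x ×ˢ 𝓝 v)
      (𝓝 (x, adjoint A v)) :=
    tendsto_fst.prodMk_nhds (((adjoint A).continuous.tendsto v).comp tendsto_snd)
  refine htend.frequently ((hfreq.and_eventually (hest.and hnorm)).mono ?_)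
  rintro ⟨y, w⟩ ⟨⟨hy, hw⟩, hyest, hwnorm⟩
  have hcw : c * ‖w‖ ≤ ε := by
    calc c * ‖w‖ ≤ c * (‖v‖ + 1) := by gcongr
      _ ≤ ε := by linarith
  exact ⟨hy, epsNormalSet_mono hcw (adjoint_mem_epsNormalSet_preimage hyest hw)⟩

-- The inclusion `⊆` is `adjoint_mem_limitingNormalCone_preimage` for the local inverse of `Φ`.
theorem limitingNormalCone_preimage [ProperSpace Y] {B : X ≃L[ℝ] Y}
    (hΦ : HasStrictFDerivAt Φ (B : X →L[ℝ] Y) x) (hΘ : LocClosedAt Θ (Φ x)) :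
    limitingNormalCone (Φ ⁻¹' Θ) x =
      adjoint (B : X →L[ℝ] Y) '' limitingNormalCone Θ (Φ x) := by
  refine Subset.antisymm (fun v hv => ⟨adjoint (B.symm : Y →L[ℝ] X) v, ?_, ?_⟩)
    (image_subset_iff.2 fun v hv =>
      adjoint_mem_limitingNormalCone_preimage hΦ (LinearEquiv.range B.toLinearEquiv) hΘ hv)
  · have hgerm : hΦ.localInverse Φ B x ⁻¹' (Φ ⁻¹' Θ) =ᶠ[𝓝 (Φ x)] Θ :=
      hΦ.eventually_right_inverse.mono fun y hy => congrArg (· ∈ Θ) hy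
    rw [← limitingNormalCone_congr hgerm]
    refine adjoint_mem_limitingNormalCone_preimage hΦ.to_localInverse
      (LinearEquiv.range B.symm.toLinearEquiv) ?_ (by rwa [hΦ.localInverse_apply_image])
    rw [hΦ.localInverse_apply_image]
    exact hΘ.preimage (eventually_continuousAt_of_hasStrictFDerivAt hΦ)
  · rw [← ContinuousLinearMap.comp_apply, ← ContinuousLinearMap.adjoint_comp,
      ContinuousLinearEquiv.coe_symm_comp_coe, ContinuousLinearMap.adjoint_id,
      ContinuousLinearMap.id_apply]

end ChangeOfVariables

section Shear

open ContinuousLinearMap (adjoint)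

variable {E F : Type*}

/-- The shear `(x, y) ↦ (x, y - f x)` of the `ℓ²` product, which carries the graph of `f + F` onto
the graph of `F`. -/
def shear [Sub F] (f : E → F) (p : WithLp 2 (E × F)) : WithLp 2 (E × F) :=
  WithLp.toLp 2 (p.fst, p.snd - f p.fst)

theorem toLp_image_svGraph_add [AddCommGroup F] (f : E → F) (Fm : E → Set F) :
    (WithLp.equiv 2 (E × F)).symm '' svGraph (fun z => (f z + ·) '' Fm z) =
      shear f ⁻¹' ((WithLp.equiv 2 (E × F)).symm '' svGraph Fm) := by
  rw [Equiv.image_symm_eq_preimage, Equiv.image_symm_eq_preimage]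
  ext p
  simp [svGraph, shear, sub_eq_neg_add]

variable [NormedAddCommGroup E] [NormedAddCommGroup F]

theorem LocClosedAt.toLp_image {s : Set (E × F)} {p : E × F} (hs : LocClosedAt s p) :
    LocClosedAt ((WithLp.equiv 2 (E × F)).symm '' s) (WithLp.toLp 2 p) := by
  rw [Equiv.image_symm_eq_preimage]
  exact LocClosedAt.preimage (g := WithLp.equiv 2 (E × F)) hs
    (Eventually.of_forall fun _ => (WithLp.prod_continuous_ofLp 2 E F).continuousAt)

section NormedSpace

variable [NormedSpace ℝ E] [NormedSpace ℝ F]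

/-- The shear along a continuous linear map, as a linear automorphism of the `ℓ²` product. -/
def shearEquiv (A : E →L[ℝ] F) : WithLp 2 (E × F) ≃L[ℝ] WithLp 2 (E × F) :=
  (WithLp.prodContinuousLinearEquiv 2 ℝ E F).trans
    (((ContinuousLinearEquiv.refl ℝ E).skewProd (ContinuousLinearEquiv.refl ℝ F) (-A)).trans
      (WithLp.prodContinuousLinearEquiv 2 ℝ E F).symm)

theorem shearEquiv_apply (A : E →L[ℝ] F) (p : WithLp 2 (E × F)) :
    shearEquiv A p = WithLp.toLp 2 (p.fst, p.snd - A p.fst) := by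
  simp [shearEquiv, sub_eq_add_neg]

theorem hasStrictFDerivAt_shear {f : E → F} {A : E →L[ℝ] F} {p : WithLp 2 (E × F)}
    (hf : HasStrictFDerivAt f A p.fst) :
    HasStrictFDerivAt (shear f) (shearEquiv A : WithLp 2 (E × F) →L[ℝ] WithLp 2 (E × F)) p := by
  have hsnd : HasStrictFDerivAt (fun q : WithLp 2 (E × F) => q.snd - f q.fst)
      (WithLp.sndL 2 ℝ E F - A ∘L WithLp.fstL 2 ℝ E F) p :=
    (WithLp.sndL 2 ℝ E F).hasStrictFDerivAt.sub
      (hf.comp p (WithLp.fstL 2 ℝ E F).hasStrictFDerivAt)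
  refine ((WithLp.prodContinuousLinearEquiv 2 ℝ E F).symm.hasStrictFDerivAt.comp p
    ((WithLp.fstL 2 ℝ E F).hasStrictFDerivAt.prodMk hsnd)).congr_fderiv ?_
  ext q : 1
  exact (shearEquiv_apply A q).symm

end NormedSpace

theorem adjoint_shearEquiv_toLp [InnerProductSpace ℝ E] [InnerProductSpace ℝ F] [CompleteSpace E]
    [CompleteSpace F] (A : E →L[ℝ] F) (w : E) (z : F) :
    adjoint (shearEquiv A : WithLp 2 (E × F) →L[ℝ] WithLp 2 (E × F)) (WithLp.toLp 2 (w, z)) =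
      WithLp.toLp 2 (w - adjoint A z, z) := by
  refine ext_inner_right ℝ fun p => ?_
  rw [ContinuousLinearMap.adjoint_inner_left, ContinuousLinearEquiv.coe_coe, shearEquiv_apply]
  simp only [WithLp.prod_inner_apply, inner_sub_left, inner_sub_right,
    ContinuousLinearMap.adjoint_inner_left]
  change ⟪w, p.fst⟫ + (⟪z, p.snd⟫ - ⟪z, A p.fst⟫) = ⟪w, p.fst⟫ - ⟪z, A p.fst⟫ + ⟪z, p.snd⟫
  ring

theorem toLp_mem_adjoint_shearEquiv_image [InnerProductSpace ℝ E] [InnerProductSpace ℝ F]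
    [CompleteSpace E] [CompleteSpace F] {A : E →L[ℝ] F} {N : Set (WithLp 2 (E × F))} {w : E}
    {z : F} :
    WithLp.toLp 2 (w, z) ∈
        adjoint (shearEquiv A : WithLp 2 (E × F) →L[ℝ] WithLp 2 (E × F)) '' N ↔
      WithLp.toLp 2 (adjoint A z + w, z) ∈ N := by
  constructor
  · rintro ⟨⟨w', z'⟩, hN, heq⟩
    rw [adjoint_shearEquiv_toLp] at heq
    obtain ⟨rfl, rfl⟩ := Prod.ext_iff.1 (WithLp.toLp_injective 2 heq)
    simpa only [add_sub_cancel] using hN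
  · exact fun hN => ⟨_, hN, by rw [adjoint_shearEquiv_toLp, add_sub_cancel_left]⟩

end Shear

theorem coDeriv_sum_rule_general {E F : Type*} [NormedAddCommGroup E] [InnerProductSpace ℝ E]
    [FiniteDimensional ℝ E] [NormedAddCommGroup F] [InnerProductSpace ℝ F]
    [FiniteDimensional ℝ F] {f : E → F} {Fm : E → Set F} {xbar : E} {A : E →L[ℝ] F}
    (hf : HasStrictFDerivAt f A xbar) {ybar : F} (hloc : LocClosedAt (svGraph Fm) (xbar, ybar))
    (u : F) :
    coDeriv (fun z => (f z + ·) '' Fm z) xbar (f xbar + ybar) u =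
      (ContinuousLinearMap.adjoint A u + ·) '' coDeriv Fm xbar ybar u := by
  have : ProperSpace (WithLp 2 (E × F)) := FiniteDimensional.proper ℝ _
  set p : WithLp 2 (E × F) := WithLp.toLp 2 (xbar, f xbar + ybar)
  have hp : shear f p = WithLp.toLp 2 (xbar, ybar) := by simp [p, shear]
  have hcone := limitingNormalCone_preimage (hasStrictFDerivAt_shear (p := p) hf)
    (by rw [hp]; exact hloc.toLp_image)
  rw [← toLp_image_svGraph_add, hp] at hcone
  ext a
  change WithLp.toLp 2 (a, -u) ∈ limitingNormalCone _ p ↔ _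
  rw [hcone, toLp_mem_adjoint_shearEquiv_image, map_neg, image_add_left]
  rfl

/-- Sum rule for coderivatives:
`D*(f+F)(xbar | f xbar + ybar)(u) = ∇f(xbar)ᵀ u + D*F(xbar|ybar)(u)`. -/
theorem coDeriv_sum_rule {n m : ℕ}
    (f : EuclideanSpace ℝ (Fin n) → EuclideanSpace ℝ (Fin m))
    (Fm : EuclideanSpace ℝ (Fin n) → Set (EuclideanSpace ℝ (Fin m)))
    (xbar : EuclideanSpace ℝ (Fin n))
    (A : EuclideanSpace ℝ (Fin n) →L[ℝ] EuclideanSpace ℝ (Fin m))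
    (hf : HasStrictFDerivAt f A xbar) (ybar : EuclideanSpace ℝ (Fin m)) (hy : ybar ∈ Fm xbar)
    (hloc : LocClosedAt (svGraph Fm) (xbar, ybar))
    (u : EuclideanSpace ℝ (Fin m)) :
    coDeriv (fun z => (f z + ·) '' Fm z) xbar (f xbar + ybar) u =
      (ContinuousLinearMap.adjoint A u + ·) '' coDeriv Fm xbar ybar u :=
  coDeriv_sum_rule_general hf hloc u

end
end

section
/- Let F : ℝⁿ ⇉ ℝᵐ be a set-valued map and (x̄, ȳ) ∈ gph F a point at which gph F is locally closed. Then reg(F; x̄|ȳ) = limsup, over (x,y) → (x̄,ȳ) with (x,y) ∈ gph F, of |DF(x|y)⁻¹|⁻. In particular, F is metrically regular at x̄ for ȳ if and only if this limsup is finite. -/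
open Filter Topology Set Metric RealInnerProductSpace
open scoped ENNReal NNReal Pointwise

noncomputable section

/-!
Both sides equal the Lipschitz modulus of `F⁻¹` at `ȳ` for `x̄`.

If `F⁻¹` has the Aubin property with constant `κ`, then for `‖v‖ ≤ 1` and small `t > 0` the graph
contains points `(x + t u, y + t v)` with `‖u‖ ≤ κ`; by compactness these `u` have a limit point as
`t ↓ 0`, and it lies in `DF(x|y)⁻¹(v)`.

Conversely, suppose `|DF(x|y)⁻¹|⁻ < c` near `(x̄, ȳ)`. To reach a target value `z` from a graph
point `(x₀, y₀)`, minimize the convex function `φ(x, y) = c ‖y - z‖ + ‖x - x₀‖` over the graph,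
which is locally compact. A convex function does not decrease along contingent directions at a local
minimizer, whereas if `y ≠ z` the bound provides a contingent direction `(u, z - y)` with
`‖u‖ < c ‖z - y‖`, along which `φ` decreases. Hence `y = z`, and comparing `φ(x, z)` with
`φ(x₀, y₀)` gives `‖x - x₀‖ ≤ c ‖y₀ - z‖`, the Aubin property with constant `c`.
-/

section ContingentCone

variable {X : Type*} [NormedAddCommGroup X] [NormedSpace ℝ X] {Ω : Set X} {x w : X}

theorem zero_mem_contingentCone (hx : x ∈ Ω) : 0 ∈ contingentCone Ω x :=
  ⟨fun k => 1 / ((k : ℝ) + 1), fun _ => 0, fun _ => by positivity,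
    tendsto_one_div_add_atTop_nhds_zero_nat, tendsto_const_nhds, fun _ => by simpa using hx⟩

theorem smul_mem_contingentCone {a : ℝ} (ha : 0 < a) (hw : w ∈ contingentCone Ω x) :
    a • w ∈ contingentCone Ω x := by
  obtain ⟨t, wk, ht_pos, ht, hwk, hmem⟩ := hw
  refine ⟨fun k => t k / a, fun k => a • wk k, fun k => div_pos (ht_pos k) ha, ?_,
    hwk.const_smul a, fun k => ?_⟩
  · simpa using ht.div_const a
  · rw [smul_smul, div_mul_cancel₀ _ ha.ne']
    exact hmem k

theorem exists_mem_contingentCone_of_frequently {K : Set X} (hK : IsCompact K)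
    (h : ∃ᶠ t : ℝ in 𝓝[>] 0, ∃ w ∈ K, x + t • w ∈ Ω) : ∃ w ∈ K, w ∈ contingentCone Ω x := by
  obtain ⟨t, ht, hmem⟩ := exists_seq_forall_of_frequently (h.and_eventually self_mem_nhdsWithin)
  choose hex ht_pos using hmem
  choose wk hwK hwΩ using hex
  obtain ⟨w, hw, φ, hφ, hlim⟩ := hK.tendsto_subseq hwK
  exact ⟨w, hw, t ∘ φ, wk ∘ φ, fun k => ht_pos (φ k),
    (tendsto_nhds_of_tendsto_nhdsWithin ht).comp hφ.tendsto_atTop, hlim, fun k => hwΩ (φ k)⟩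

theorem le_add_of_isLocalMinOn_of_mem_contingentCone {f : X → ℝ} (hmin : IsLocalMinOn f Ω x)
    (hconv : ConvexOn ℝ univ f) (hcont : ContinuousAt f (x + w)) (hw : w ∈ contingentCone Ω x) :
    f x ≤ f (x + w) := by
  obtain ⟨t, wk, ht_pos, ht, hwk, hmem⟩ := hw
  have hnear : Tendsto (fun k => x + t k • wk k) atTop (𝓝[Ω] x) :=
    tendsto_nhdsWithin_iff.2
      ⟨by simpa using (ht.smul hwk).const_add x, Eventually.of_forall hmem⟩
  have hlim : Tendsto (fun k => f (x + wk k)) atTop (𝓝 (f (x + w))) :=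
    hcont.tendsto.comp (hwk.const_add x)
  refine ge_of_tendsto hlim ?_
  filter_upwards [hnear.eventually hmin, ht.eventually_le_const one_pos] with k hk htk
  have hcomb : f (x + t k • wk k) ≤ (1 - t k) * f x + t k * f (x + wk k) := by
    have := hconv.2 (mem_univ x) (mem_univ (x + wk k)) (sub_nonneg.2 htk) (ht_pos k).le
      (sub_add_cancel 1 (t k))
    rwa [smul_add, ← add_assoc, ← add_smul, sub_add_cancel, one_smul] at this
  exact le_of_mul_le_mul_left (by linarith) (ht_pos k)

end ContingentCone

section InnerNorm

variable {E F : Type*} [NormedAddCommGroup E] [NormedAddCommGroup F] {H : E → Set F} {c : ℝ≥0}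

theorem innerNormSV_le (h : ∀ v, ‖v‖ ≤ 1 → ∃ u ∈ H v, ‖u‖ ≤ c) : innerNormSV H ≤ c := by
  refine iSup₂_le fun v hv => ?_
  obtain ⟨u, hu, huc⟩ := h v hv
  exact (iInf₂_le u hu).trans (ENNReal.coe_le_coe.2 huc)

theorem exists_mem_norm_lt_of_innerNormSV_lt (h : innerNormSV H < c) {v : E} (hv : ‖v‖ ≤ 1) :
    ∃ u ∈ H v, ‖u‖ < c := by
  have hinf : (⨅ (u : F) (_ : u ∈ H v), (‖u‖₊ : ℝ≥0∞)) < c :=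
    (le_iSup₂ (f := fun (x : E) (_ : ‖x‖ ≤ 1) => ⨅ (u : F) (_ : u ∈ H x), (‖u‖₊ : ℝ≥0∞))
      v hv).trans_lt h
  obtain ⟨u, hu, huc⟩ := by simpa only [iInf_lt_iff] using hinf
  exact ⟨u, hu, ENNReal.coe_lt_coe.1 huc⟩

theorem PosHomogeneous.exists_mem_norm_lt [NormedSpace ℝ E] [NormedSpace ℝ F]
    (hH : PosHomogeneous H) (h : innerNormSV H < c) {v : E} (hv : v ≠ 0) :
    ∃ u ∈ H v, ‖u‖ < c * ‖v‖ := by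
  have hv_pos : 0 < ‖v‖ := norm_pos_iff.2 hv
  have hunit : ‖‖v‖⁻¹ • v‖ ≤ 1 := by
    rw [norm_smul, norm_inv, norm_norm, inv_mul_cancel₀ hv_pos.ne']
  obtain ⟨u, hu, huc⟩ := exists_mem_norm_lt_of_innerNormSV_lt h hunit
  refine ⟨‖v‖ • u, ?_, ?_⟩
  · have hmem : ‖v‖ • u ∈ ‖v‖ • H (‖v‖⁻¹ • v) := smul_mem_smul_set hu
    rwa [← hH.2 _ hv_pos, smul_inv_smul₀ hv_pos.ne'] at hmem
  · rw [norm_smul, norm_norm, mul_comm]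
    gcongr

end InnerNorm

theorem posHomogeneous_svInv_gDeriv {E F : Type*} [NormedAddCommGroup E] [NormedSpace ℝ E]
    [NormedAddCommGroup F] [NormedSpace ℝ F] {Fm : E → Set F} {x : E} {y : F}
    (hxy : (x, y) ∈ svGraph Fm) : PosHomogeneous (svInv (gDeriv Fm x y)) := by
  refine ⟨zero_mem_contingentCone hxy, fun a ha v => ext fun u => ?_⟩
  rw [mem_smul_set_iff_inv_smul_mem₀ ha.ne']
  constructor <;> intro hu
  · simpa [svInv, gDeriv, ha.ne'] using smul_mem_contingentCone (inv_pos.2 ha) hu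
  · simpa [svInv, gDeriv, ha.ne'] using smul_mem_contingentCone ha hu

theorem infEDist_le_mul_infEDist {α β : Type*} [PseudoMetricSpace α] [PseudoMetricSpace β]
    {s : Set α} {t : Set β} {x : α} {y : β} {κ : ℝ≥0} (hκ : 0 < κ)
    (h : ∀ b ∈ t, ∃ a ∈ s, dist x a ≤ κ * dist y b) :
    infEDist x s ≤ κ * infEDist y t := by
  have hκ₀ : (κ : ℝ≥0∞) ≠ 0 := ENNReal.coe_ne_zero.2 hκ.ne'
  rw [mul_comm, ← ENNReal.div_le_iff hκ₀ ENNReal.coe_ne_top]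
  refine le_infEDist.2 fun b hb => ?_
  rw [ENNReal.div_le_iff hκ₀ ENNReal.coe_ne_top, mul_comm]
  obtain ⟨a, ha, hab⟩ := h b hb
  refine (infEDist_le_edist_of_mem ha).trans ?_
  rw [edist_nndist, edist_nndist]
  exact_mod_cast hab

theorem iInf_coe_le_iInf_coe {P Q : ℝ≥0 → Prop} (h : ∀ κ κ', κ < κ' → Q κ → P κ') :
    ⨅ (κ : ℝ≥0) (_ : P κ), (κ : ℝ≥0∞) ≤ ⨅ (κ : ℝ≥0) (_ : Q κ), (κ : ℝ≥0∞) := by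
  refine le_iInf₂ fun κ hκ => le_of_forall_gt fun b hb => ?_
  obtain ⟨κ', hκκ', hκ'b⟩ := ENNReal.lt_iff_exists_nnreal_btwn.1 hb
  exact (iInf₂_le κ' (h κ κ' (ENNReal.coe_lt_coe.1 hκκ') hκ)).trans_lt hκ'b

section AubinProperty

variable {E F : Type*} [NormedAddCommGroup E] [NormedAddCommGroup F] {Fm : E → Set F}
  {xbar : E} {ybar : F} {κ κ' : ℝ≥0}

theorem MetrRegWith.aubinWith_svInv (h : MetrRegWith κ Fm xbar ybar) (hκ : κ < κ') :
    AubinWith κ' (svInv Fm) ybar xbar := by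
  obtain ⟨U, hU, V, hV, hreg⟩ := h
  refine ⟨V, hV, U, hU, fun y hy y' _ x ⟨hx, hxU⟩ => ?_⟩
  rcases eq_or_ne y y' with rfl | hne
  · exact ⟨x, hx, by simp⟩
  have hlt : infEDist x (svInv Fm y) < κ' * edist y y' :=
    calc infEDist x (svInv Fm y) ≤ κ * infEDist y (Fm x) := hreg x hxU y hy
      _ ≤ κ * edist y y' := by gcongr; exact infEDist_le_edist_of_mem hx
      _ < κ' * edist y y' :=
        ENNReal.mul_lt_mul_left (edist_pos.2 hne).ne' (edist_ne_top y y') (by exact_mod_cast hκ)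
  obtain ⟨x', hx', hxx'⟩ := infEDist_lt_iff.1 hlt
  rw [edist_nndist, edist_nndist] at hxx'
  refine ⟨x', hx', ?_⟩
  rw [← dist_eq_norm, ← dist_eq_norm]
  exact_mod_cast hxx'.le

theorem AubinWith.metrRegWith (h : AubinWith κ (svInv Fm) ybar xbar) (hκ : κ < κ')
    (hgr : ybar ∈ Fm xbar) : MetrRegWith κ' Fm xbar ybar := by
  obtain ⟨V, hV, U, hU, hA⟩ := h
  obtain ⟨ε, hε, hεV⟩ := Metric.mem_nhds_iff.1 hV
  have hκ'_pos : 0 < κ' := hκ.pos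
  have hκκ' : (κ : ℝ) ≤ κ' := hκ.le
  obtain ⟨η, hη, hηε⟩ : ∃ η > 0, (1 + 2 * κ') * η ≤ κ' * ε :=
    ⟨κ' * ε / (1 + 2 * κ'), by positivity, (mul_div_cancel₀ _ (by positivity)).le⟩
  refine ⟨U ∩ ball xbar η, inter_mem hU (ball_mem_nhds _ hη), V ∩ ball ybar η,
    inter_mem hV (ball_mem_nhds _ hη), fun x hx z hz => infEDist_le_mul_infEDist hκ'_pos ?_⟩
  intro y hy
  by_cases hyV : y ∈ V
  · obtain ⟨x', hx', hxx'⟩ := hA z hz.1 y hyV x ⟨hy, hx.1⟩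
    exact ⟨x', hx', by rw [dist_eq_norm, dist_eq_norm]; exact hxx'.trans (by gcongr)⟩
  -- Outside `V`, the values of `Fm x` are so far from `z` that a preimage near `xbar` suffices.
  · obtain ⟨x', hx', hxx'⟩ :=
      hA z hz.1 ybar (mem_of_mem_nhds hV) xbar ⟨hgr, mem_of_mem_nhds hU⟩
    refine ⟨x', hx', ?_⟩
    have hx_near : dist x xbar < η := hx.2
    have hz_near : dist z ybar < η := hz.2
    have hy_far : ε ≤ dist y ybar := not_lt.1 fun hlt => hyV (hεV hlt)
    calc dist x x' ≤ dist x xbar + dist xbar x' := dist_triangle _ _ _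
      _ ≤ η + κ' * η := by
        rw [← dist_eq_norm, ← dist_eq_norm] at hxx'
        gcongr
        exact hxx'.trans (by gcongr)
      _ ≤ κ' * (ε - η) := by linarith
      _ ≤ κ' * dist z y := by
        gcongr
        linarith [dist_triangle_left y ybar z]

theorem regMod_eq_lipMod_svInv (hgr : ybar ∈ Fm xbar) :
    regMod Fm xbar ybar = lipMod (svInv Fm) ybar xbar :=
  le_antisymm (iInf_coe_le_iInf_coe fun _ _ hκ h => h.metrRegWith hκ hgr)
    (iInf_coe_le_iInf_coe fun _ _ hκ h => h.aubinWith_svInv hκ)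

theorem regMod_lt_top_iff : regMod Fm xbar ybar < ⊤ ↔ ∃ κ, MetrRegWith κ Fm xbar ybar := by
  simp only [regMod, iInf_lt_iff, ENNReal.coe_lt_top, exists_prop, and_true]

end AubinProperty

section PenalizedResidual

variable {E F : Type*} [NormedAddCommGroup E] [NormedAddCommGroup F]

/-- The merit function `c ‖y - z‖ + ‖x - x₀‖` on pairs `p = (x, y)`, minimized over the graph of a
set-valued map to find a preimage of `z` near `x₀`. The weight sits on the residual instead of
`c⁻¹` on the displacement, so that no inverses occur. -/
def penalizedResidual (c : ℝ≥0) (x₀ : E) (z : F) (p : E × F) : ℝ :=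
  c * dist p.2 z + dist p.1 x₀

variable {c : ℝ≥0} {x₀ : E} {y₀ z : F} {p : E × F}

theorem continuous_penalizedResidual : Continuous (penalizedResidual c x₀ z) := by
  unfold penalizedResidual
  fun_prop

theorem convexOn_penalizedResidual [NormedSpace ℝ E] [NormedSpace ℝ F] :
    ConvexOn ℝ univ (penalizedResidual c x₀ z) :=
  (((convexOn_univ_dist z).comp_linearMap (LinearMap.snd ℝ E F)).smul c.coe_nonneg).add
    ((convexOn_univ_dist x₀).comp_linearMap (LinearMap.fst ℝ E F))

theorem dist_fst_le_of_penalizedResidual_le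
    (h : penalizedResidual c x₀ z p ≤ penalizedResidual c x₀ z (x₀, y₀)) :
    dist p.1 x₀ ≤ c * dist y₀ z := by
  have hres : 0 ≤ c * dist p.2 z := by positivity
  simp only [penalizedResidual, dist_self, add_zero] at h
  linarith

theorem dist_snd_le_of_penalizedResidual_le (hc : 0 < c)
    (h : penalizedResidual c x₀ z p ≤ penalizedResidual c x₀ z (x₀, y₀)) :
    dist p.2 z ≤ dist y₀ z := by
  simp only [penalizedResidual, dist_self, add_zero] at h
  exact le_of_mul_le_mul_left ((le_add_of_nonneg_right dist_nonneg).trans h) hc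

theorem mem_ball_of_penalizedResidual_le {xbar : E} {ybar : F} {δ ρ : ℝ} (hc : 0 < c)
    (hδρ : (3 + 2 * c) * δ ≤ ρ) (hx₀ : dist x₀ xbar < δ) (hy₀ : dist y₀ ybar < δ)
    (hz : dist z ybar < δ)
    (h : penalizedResidual c x₀ z p ≤ penalizedResidual c x₀ z (x₀, y₀)) :
    p ∈ ball (xbar, ybar) ρ := by
  have hδ : 0 < δ := dist_nonneg.trans_lt hz
  have hcδ : 0 ≤ c * δ := by positivity
  have hy₀z : dist y₀ z ≤ 2 * δ := by linarith [dist_triangle_right y₀ z ybar]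
  have hx : dist p.1 x₀ ≤ c * (2 * δ) :=
    (dist_fst_le_of_penalizedResidual_le h).trans (by gcongr)
  have hy : dist p.2 z ≤ 2 * δ := (dist_snd_le_of_penalizedResidual_le hc h).trans hy₀z
  rw [mem_ball, Prod.dist_eq]
  exact max_lt (by linarith [dist_triangle p.1 x₀ xbar]) (by linarith [dist_triangle p.2 z ybar])

theorem snd_eq_of_isLocalMinOn_penalizedResidual [NormedSpace ℝ E] [NormedSpace ℝ F]
    {Fm : E → Set F} (hp : p ∈ svGraph Fm) (hD : innerNormSV (svInv (gDeriv Fm p.1 p.2)) < c)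
    (hmin : IsLocalMinOn (penalizedResidual c x₀ z) (svGraph Fm) p) : p.2 = z := by
  by_contra hne
  obtain ⟨u, hu, hu_lt⟩ :=
    (posHomogeneous_svInv_gDeriv hp).exists_mem_norm_lt hD (sub_ne_zero.2 (Ne.symm hne))
  have hle : penalizedResidual c x₀ z p ≤ penalizedResidual c x₀ z (p + (u, z - p.2)) :=
    le_add_of_isLocalMinOn_of_mem_contingentCone hmin convexOn_penalizedResidual
      continuous_penalizedResidual.continuousAt hu
  have hstep : dist (p.1 + u) x₀ ≤ ‖u‖ + dist p.1 x₀ := by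
    simpa using dist_triangle (p.1 + u) p.1 x₀
  simp only [penalizedResidual, Prod.fst_add, Prod.snd_add, add_sub_cancel, dist_self,
    mul_zero, zero_add] at hle
  rw [← dist_eq_norm, dist_comm] at hu_lt
  linarith

end PenalizedResidual

section LocallyClosed

variable {X : Type*} [PseudoMetricSpace X] {s : Set X} {a : X}

theorem LocClosedAt.eventually_isCompact_inter_closedBall [ProperSpace X] (h : LocClosedAt s a) :
    ∀ᶠ ρ in 𝓝[>] 0, IsCompact (s ∩ closedBall a ρ) := by
  obtain ⟨r, hr, hclosed⟩ := h
  filter_upwards [Ioc_mem_nhdsGT hr] with ρ hρ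
  have hinter : s ∩ closedBall a ρ = closedBall a ρ ∩ (s ∩ closedBall a r) := by
    rw [inter_left_comm, inter_eq_left.2 (closedBall_subset_closedBall hρ.2)]
  exact hinter ▸ (isCompact_closedBall a ρ).inter_right hclosed

theorem eventually_forall_mem_inter_ball {P : X → Prop} (h : ∀ᶠ x in 𝓝[s] a, P x) :
    ∀ᶠ ρ in 𝓝[>] (0 : ℝ), ∀ x ∈ s ∩ ball a ρ, P x := by
  obtain ⟨r, hr, hball⟩ := Metric.mem_nhdsWithin_iff.1 h
  filter_upwards [Ioc_mem_nhdsGT hr] with ρ hρ x hx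
  exact hball ⟨ball_subset_ball hρ.2 hx.2, hx.1⟩

theorem exists_isLocalMinOn_of_sublevel_subset_ball {f : X → ℝ} {x₀ : X} {ρ : ℝ}
    (hf : Continuous f) (hs : IsCompact (s ∩ closedBall a ρ)) (hx₀ : x₀ ∈ s)
    (hsub : ∀ x ∈ s, f x ≤ f x₀ → x ∈ ball a ρ) :
    ∃ x ∈ s ∩ ball a ρ, f x ≤ f x₀ ∧ IsLocalMinOn f s x := by
  have hx₀_mem : x₀ ∈ s ∩ closedBall a ρ := ⟨hx₀, ball_subset_closedBall (hsub x₀ hx₀ le_rfl)⟩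
  obtain ⟨x, hx, hmin⟩ := hs.exists_isMinOn ⟨x₀, hx₀_mem⟩ hf.continuousOn
  have hle : f x ≤ f x₀ := hmin hx₀_mem
  have hx_ball : x ∈ ball a ρ := hsub x hx.1 hle
  refine ⟨x, ⟨hx.1, hx_ball⟩, hle, ?_⟩
  filter_upwards [self_mem_nhdsWithin,
    mem_nhdsWithin_of_mem_nhds (closedBall_mem_nhds_of_mem hx_ball)] with y hys hy
  exact hmin ⟨hys, hy⟩

end LocallyClosed

section Criterion

variable {E F : Type*} [NormedAddCommGroup E] [NormedSpace ℝ E] [ProperSpace E]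
  [NormedAddCommGroup F] [NormedSpace ℝ F] {Fm : E → Set F} {xbar : E} {ybar : F}

theorem AubinWith.eventually_innerNormSV_le {κ : ℝ≥0} (h : AubinWith κ (svInv Fm) ybar xbar) :
    ∀ᶠ q in 𝓝[svGraph Fm] (xbar, ybar), innerNormSV (svInv (gDeriv Fm q.1 q.2)) ≤ κ := by
  obtain ⟨V, hV, U, hU, hA⟩ := h
  filter_upwards [self_mem_nhdsWithin, mem_nhdsWithin_of_mem_nhds
    (prod_mem_nhds hU (eventually_mem_nhds_iff.2 hV))]
  rintro ⟨x, y⟩ hxy ⟨hxU, hyV : V ∈ 𝓝 y⟩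
  refine innerNormSV_le fun v hv => ?_
  have hline : Tendsto (fun t : ℝ => y + t • v) (𝓝[>] 0) (𝓝 y) :=
    tendsto_nhdsWithin_of_tendsto_nhds <| Continuous.tendsto' (by fun_prop) _ _ (by simp)
  have hlift : ∀ᶠ t : ℝ in 𝓝[>] 0,
      ∃ w ∈ closedBall (0 : E) κ ×ˢ {v}, (x, y) + t • w ∈ svGraph Fm := by
    filter_upwards [hline hyV, self_mem_nhdsWithin] with t htV (ht : 0 < t)
    obtain ⟨x', hx', hxx'⟩ := hA (y + t • v) htV y (mem_of_mem_nhds hyV) x ⟨hxy, hxU⟩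
    refine ⟨(t⁻¹ • (x' - x), v), ⟨?_, rfl⟩, ?_⟩
    · rw [mem_closedBall_zero_iff, norm_smul, norm_inv, Real.norm_of_nonneg ht.le,
        inv_mul_le_iff₀ ht, norm_sub_rev, mul_comm]
      calc ‖x - x'‖ ≤ κ * (t * ‖v‖) := by simpa [norm_smul, abs_of_pos ht] using hxx'
        _ ≤ κ * t := by gcongr; exact mul_le_of_le_one_right ht.le hv
    · change y + t • v ∈ Fm (x + t • t⁻¹ • (x' - x))
      rwa [smul_inv_smul₀ ht.ne', add_sub_cancel]
  obtain ⟨⟨u, v'⟩, ⟨hu, rfl⟩, hcone⟩ := exists_mem_contingentCone_of_frequently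
    ((isCompact_closedBall 0 _).prod isCompact_singleton) hlift.frequently
  exact ⟨u, hcone, mem_closedBall_zero_iff.1 hu⟩

variable [ProperSpace F]

theorem aubinWith_svInv_of_eventually_innerNormSV_lt {c : ℝ≥0} (hc : 0 < c)
    (hloc : LocClosedAt (svGraph Fm) (xbar, ybar))
    (h : ∀ᶠ q in 𝓝[svGraph Fm] (xbar, ybar), innerNormSV (svInv (gDeriv Fm q.1 q.2)) < c) :
    AubinWith c (svInv Fm) ybar xbar := by
  obtain ⟨ρ, ⟨hcompact, hD⟩, hρ : 0 < ρ⟩ :=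
    ((hloc.eventually_isCompact_inter_closedBall.and
      (eventually_forall_mem_inter_ball h)).and self_mem_nhdsWithin).exists
  obtain ⟨δ, hδ, hδρ⟩ : ∃ δ > 0, (3 + 2 * c) * δ ≤ ρ :=
    ⟨ρ / (3 + 2 * c), by positivity, (mul_div_cancel₀ _ (by positivity)).le⟩
  refine ⟨ball ybar δ, ball_mem_nhds _ hδ, ball xbar δ, ball_mem_nhds _ hδ,
    fun z hz y₀ hy₀ x₀ ⟨hx₀y₀, hx₀⟩ => ?_⟩
  obtain ⟨p, hp, hle, hmin⟩ := exists_isLocalMinOn_of_sublevel_subset_ball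
    (x₀ := (x₀, y₀)) (continuous_penalizedResidual (c := c) (x₀ := x₀) (z := z)) hcompact hx₀y₀
    fun _ _ => mem_ball_of_penalizedResidual_le hc hδρ hx₀ hy₀ hz
  have hpz : p.2 = z := snd_eq_of_isLocalMinOn_penalizedResidual hp.1 (hD p hp) hmin
  refine ⟨p.1, hpz ▸ hp.1, ?_⟩
  rw [← dist_eq_norm, ← dist_eq_norm, dist_comm x₀, dist_comm z]
  exact dist_fst_le_of_penalizedResidual_le hle

theorem lipMod_svInv_eq_limsup_innerNormSV (hloc : LocClosedAt (svGraph Fm) (xbar, ybar)) :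
    lipMod (svInv Fm) ybar xbar = limsup (fun q : E × F => innerNormSV (svInv (gDeriv Fm q.1 q.2)))
      (𝓝[svGraph Fm] (xbar, ybar)) := by
  refine le_antisymm (le_of_forall_gt fun b hb => ?_)
    (le_iInf₂ fun κ hκ => limsup_le_of_le (by isBoundedDefault) hκ.eventually_innerNormSV_le)
  obtain ⟨c, hc, hcb⟩ := ENNReal.lt_iff_exists_nnreal_btwn.1 hb
  have hAubin : AubinWith c (svInv Fm) ybar xbar :=
    aubinWith_svInv_of_eventually_innerNormSV_lt (ENNReal.coe_pos.1 hc.pos) hloc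
      (eventually_lt_of_limsup_lt hc)
  exact (iInf₂_le c hAubin).trans_lt hcb

end Criterion

theorem gDeriv_criterion_for_metric_regularity_general {E F : Type*}
    [NormedAddCommGroup E] [NormedSpace ℝ E] [ProperSpace E]
    [NormedAddCommGroup F] [NormedSpace ℝ F] [ProperSpace F]
    (Fm : E → Set F) (xbar : E) (ybar : F)
    (hgr : ybar ∈ Fm xbar) (hloc : LocClosedAt (svGraph Fm) (xbar, ybar)) :
    regMod Fm xbar ybar = limsup (fun q : E × F => innerNormSV (svInv (gDeriv Fm q.1 q.2)))
        (𝓝[svGraph Fm] (xbar, ybar)) ∧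
    ((∃ κ : ℝ≥0, MetrRegWith κ Fm xbar ybar) ↔
      limsup (fun q : E × F => innerNormSV (svInv (gDeriv Fm q.1 q.2)))
        (𝓝[svGraph Fm] (xbar, ybar)) < ⊤) := by
  have hreg := (regMod_eq_lipMod_svInv hgr).trans (lipMod_svInv_eq_limsup_innerNormSV hloc)
  exact ⟨hreg, hreg ▸ regMod_lt_top_iff.symm⟩

/-- Graphical derivative criterion for metric regularity:
`reg (F; xbar|ybar)` equals the limsup of `|DF(x|y)⁻¹|⁻` over the graph. -/
theorem gDeriv_criterion_for_metric_regularity {n m : ℕ}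
    (Fm : EuclideanSpace ℝ (Fin n) → Set (EuclideanSpace ℝ (Fin m)))
    (xbar : EuclideanSpace ℝ (Fin n)) (ybar : EuclideanSpace ℝ (Fin m))
    (hgr : ybar ∈ Fm xbar) (hloc : LocClosedAt (svGraph Fm) (xbar, ybar)) :
    regMod Fm xbar ybar = Filter.limsup
        (fun q : EuclideanSpace ℝ (Fin n) × EuclideanSpace ℝ (Fin m) =>
          innerNormSV (svInv (gDeriv Fm q.1 q.2)))
        (𝓝[svGraph Fm] (xbar, ybar)) ∧
    ((∃ κ : ℝ≥0, MetrRegWith κ Fm xbar ybar) ↔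
      Filter.limsup
        (fun q : EuclideanSpace ℝ (Fin n) × EuclideanSpace ℝ (Fin m) =>
          innerNormSV (svInv (gDeriv Fm q.1 q.2)))
        (𝓝[svGraph Fm] (xbar, ybar)) < ⊤) :=
  gDeriv_criterion_for_metric_regularity_general Fm xbar ybar hgr hloc

end
end
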